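/- arXiv:gr-qc/0511135 — 3 statements merged into one kernel-verified Lean document; each statement's English description precedes it below -/
import Mathlib

section
/- For each sign ε ∈ {+1, −1}, the partial derivatives of the potential Ψ_ε on {r > r₊, 0 < θ < π} are given by ∂Ψ_ε/∂r = (2rΔ − (r−m)ρ² + 2εar√Δ sin θ) / (√Δ sin θ (r² + a² + εa√Δ sin θ)²) and ∂Ψ_ε/∂θ = (ρ² + 2a² sin²θ + 2εa√Δ sin θ)√Δ cos θ / (sin²θ (r² + a² + εa√Δ sin θ)²). -/
noncomputable section

open Real

/-- Δ = r² − 2mr + a² + q² -/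
def Delta (m a q r : ℝ) : ℝ := r ^ 2 - 2 * m * r + a ^ 2 + q ^ 2

/-- ρ² = r² + a² cos²θ -/
def rhoSq (a r θ : ℝ) : ℝ := r ^ 2 + a ^ 2 * Real.cos θ ^ 2

/-- r₊ = m + √(m² − a² − q²) -/
def rPlus (m a q : ℝ) : ℝ := m + Real.sqrt (m ^ 2 - a ^ 2 - q ^ 2)

/-- The potential Ψ_ε(r,θ) = (−1/sin θ − ε a/√Δ) / ((r² + a²)/√Δ + ε a sin θ). -/
def Psi (m a q ε r θ : ℝ) : ℝ :=
  (-1 / Real.sin θ - ε * a / Real.sqrt (Delta m a q r)) /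
    ((r ^ 2 + a ^ 2) / Real.sqrt (Delta m a q r) + ε * a * Real.sin θ)

lemma Psi_eq_aux (m a q ε r θ : ℝ) (hw : Real.sqrt (Delta m a q r) ≠ 0) :
    Psi m a q ε r θ = (-1 / Real.sin θ * Real.sqrt (Delta m a q r) - ε * a) /
      (r ^ 2 + a ^ 2 + ε * a * Real.sqrt (Delta m a q r) * Real.sin θ) := by
  unfold Psi
  rw [← mul_div_mul_right _ _ hw]
  congr 1
  · rw [sub_mul, div_mul_cancel₀ _ hw]
  · rw [add_mul, div_mul_cancel₀ _ hw]; ring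

theorem psi_partial_derivatives (m a q : ℝ) (hm : 0 < m) (ha : 0 ≤ a)
    (hmaq : a ^ 2 + q ^ 2 ≤ m ^ 2) (ε : ℝ) (hε : ε = 1 ∨ ε = -1)
    (r θ : ℝ) (hr : rPlus m a q < r) (hθ0 : 0 < θ) (hθπ : θ < π) :
    deriv (fun r' => Psi m a q ε r' θ) r =
      (2 * r * Delta m a q r - (r - m) * rhoSq a r θ
          + 2 * ε * a * r * Real.sqrt (Delta m a q r) * Real.sin θ) /
        (Real.sqrt (Delta m a q r) * Real.sin θ *
          (r ^ 2 + a ^ 2 + ε * a * Real.sqrt (Delta m a q r) * Real.sin θ) ^ 2) ∧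
    deriv (fun θ' => Psi m a q ε r θ') θ =
      (rhoSq a r θ + 2 * a ^ 2 * Real.sin θ ^ 2
          + 2 * ε * a * Real.sqrt (Delta m a q r) * Real.sin θ) *
        Real.sqrt (Delta m a q r) * Real.cos θ /
        (Real.sin θ ^ 2 *
          (r ^ 2 + a ^ 2 + ε * a * Real.sqrt (Delta m a q r) * Real.sin θ) ^ 2) := by
  have hs : 0 < Real.sin θ := Real.sin_pos_of_pos_of_lt_pi hθ0 hθπ
  have hs1 : Real.sin θ ≤ 1 := Real.sin_le_one θ
  have hcs : Real.cos θ ^ 2 = 1 - Real.sin θ ^ 2 := Real.cos_sq' θ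
  have hb : 0 ≤ Real.sqrt (m ^ 2 - a ^ 2 - q ^ 2) := Real.sqrt_nonneg _
  have hb2 : Real.sqrt (m ^ 2 - a ^ 2 - q ^ 2) ^ 2 = m ^ 2 - a ^ 2 - q ^ 2 :=
    Real.sq_sqrt (by linarith)
  unfold rPlus at hr
  have hrm : m < r := by linarith
  have hΔ : 0 < Delta m a q r := by
    unfold Delta
    nlinarith
  have hΔlt : Delta m a q r < r ^ 2 + a ^ 2 := by
    unfold Delta
    nlinarith [sq_nonneg a, mul_pos hm (sub_pos.2 hrm), mul_pos hm hm]
  have hdΔ : HasDerivAt (fun x => Delta m a q x) (2 * r - 2 * m) r := by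
    unfold Delta
    have h := ((((hasDerivAt_pow 2 r).fun_sub ((hasDerivAt_id' r).const_mul (2 * m))).add_const
      (a ^ 2)).add_const (q ^ 2))
    exact h.congr_deriv (by norm_num)
  have hw : 0 < Real.sqrt (Delta m a q r) := Real.sqrt_pos.2 hΔ
  have hw2 : Real.sqrt (Delta m a q r) ^ 2 = Delta m a q r := Real.sq_sqrt hΔ.le
  have hdw := hdΔ.sqrt hΔ.ne'
  have hev : ∀ᶠ x in nhds r, 0 < Delta m a q x :=
    hdΔ.continuousAt.eventually (lt_mem_nhds hΔ)
  have hD : 0 < r ^ 2 + a ^ 2 + ε * a * Real.sqrt (Delta m a q r) * Real.sin θ := by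
    have h1 : a * Real.sqrt (Delta m a q r) * Real.sin θ ≤ a * Real.sqrt (Delta m a q r) :=
      mul_le_of_le_one_right (by positivity) hs1
    have h0 : 0 ≤ a * Real.sqrt (Delta m a q r) * Real.sin θ := by positivity
    have h2 := sq_nonneg (a - Real.sqrt (Delta m a q r))
    have h3 : 0 < r ^ 2 := by have : 0 < r := hm.trans hrm
                              positivity
    rcases hε with rfl | rfl <;> nlinarith [sq_nonneg a]
  constructor
  · have he : (fun x => Psi m a q ε x θ) =ᶠ[nhds r] fun x =>
        (-1 / Real.sin θ * Real.sqrt (Delta m a q x) - ε * a) /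
          (x ^ 2 + a ^ 2 + ε * a * Real.sqrt (Delta m a q x) * Real.sin θ) := by
      filter_upwards [hev] with x hx
      exact Psi_eq_aux m a q ε x θ (Real.sqrt_pos.2 hx).ne'
    rw [he.deriv_eq]
    have h := ((hdw.const_mul (-1 / Real.sin θ)).sub_const (ε * a)).fun_div
      ((((hasDerivAt_pow 2 r).add_const (a ^ 2))).fun_add
        ((hdw.const_mul (ε * a)).mul_const (Real.sin θ))) hD.ne'
    rw [h.deriv]
    rw [← hw2]
    simp only [Real.sqrt_sq hw.le]
    unfold rhoSq
    rw [hcs]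
    generalize Real.sqrt (Delta m a q r) = w at *
    generalize Real.sin θ = s at *
    rw [← div_div _ (w * s) _]
    congr 1
    have hs' := hs.ne'
    have hw' := hw.ne'
    field_simp
    rcases hε with rfl | rfl <;> ring
  · have he : (fun x => Psi m a q ε r x) = fun x =>
        (-1 / Real.sin x * Real.sqrt (Delta m a q r) - ε * a) /
          (r ^ 2 + a ^ 2 + ε * a * Real.sqrt (Delta m a q r) * Real.sin x) := by
      funext x
      exact Psi_eq_aux m a q ε r x hw.ne'
    rw [he]
    have hds := Real.hasDerivAt_sin θ
    have h := ((((hasDerivAt_const θ (-1 : ℝ)).fun_div hds hs.ne').mul_const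
      (Real.sqrt (Delta m a q r))).sub_const (ε * a)).fun_div
      ((hds.const_mul (ε * a * Real.sqrt (Delta m a q r))).const_add (r ^ 2 + a ^ 2)) hD.ne'
    rw [h.deriv]
    unfold rhoSq
    rw [hcs]
    generalize Real.sqrt (Delta m a q r) = w at *
    generalize Real.sin θ = s at *
    rw [mul_comm (s ^ 2), ← div_div, div_right_comm]
    congr 1
    have hs' := hs.ne'
    field_simp
    rcases hε with rfl | rfl <;> ring
end
end

section
/- Assume 0 < a² + q² < m². For each sign ε ∈ {+1, −1} there exists exactly one real number r > r₊ satisfying the photon-circle equation r² − 3mr + 2a² + 2q² + 2εa√(r² − 2mr + a² + q²) = 0. (The solution for ε = +1 is the co-rotating photon circle radius r₊^ph and the solution for ε = −1 is the counter-rotating photon circle radius r₋^ph.) -/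
noncomputable section

open Real

/-- A key strict monotonicity fact, in the shifted variable `w = r - m`. -/
lemma photon_aux (m a d w₁ w₂ S₁ S₂ ε : ℝ) (hm : 0 < m) (ha : 0 ≤ a) (hd : 0 < d)
    (h1 : d < w₁) (h12 : w₁ < w₂) (hS1 : 0 ≤ S₁) (hS2 : 0 ≤ S₂)
    (e1 : S₁ ^ 2 = w₁ ^ 2 - d ^ 2) (e2 : S₂ ^ 2 = w₂ ^ 2 - d ^ 2)
    (hε : ε = 1 ∨ ε = -1)
    (f1 : w₁ ^ 2 - m * w₁ - 2 * d ^ 2 + 2 * ε * a * S₁ = 0)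
    (f2 : w₂ ^ 2 - m * w₂ - 2 * d ^ 2 + 2 * ε * a * S₂ = 0) : False := by
  have hw1 : 0 < w₁ := hd.trans h1
  have hw2 : 0 < w₂ := hw1.trans h12
  have p1 : 0 < w₁ - d := by linarith
  have p2 : 0 < w₂ - d := by linarith
  have p3 : 0 < w₂ - w₁ := by linarith
  rcases hε with rfl | rfl
  · have key : S₁ * w₂ ≤ S₂ * w₁ := by
      refine (sq_le_sq₀ (by positivity) (by positivity)).mp ?_
      rw [mul_pow, mul_pow, e1, e2]
      have : 0 ≤ d ^ 2 * ((w₂ - w₁) * (w₂ + w₁)) := by positivity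
      nlinarith
    have k1 : 0 ≤ a * (S₂ * w₁ - S₁ * w₂) := mul_nonneg ha (by linarith)
    have k2 : 0 < w₁ * w₂ * (w₂ - w₁) := by positivity
    have k3 : 0 < d ^ 2 * (w₂ - w₁) := by positivity
    refine lt_irrefl (0 : ℝ) ?_
    linear_combination k2 + 2 * k3 + 2 * k1 + w₁ * f2 - w₂ * f1
  · have key : S₂ * (w₁ - d) ≤ S₁ * (w₂ - d) := by
      refine (sq_le_sq₀ (by positivity) (by positivity)).mp ?_
      rw [mul_pow, mul_pow, e1, e2]
      have : 0 ≤ (w₁ - d) * (w₂ - d) * (d * (w₂ - w₁)) := by positivity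
      linear_combination 2 * this
    have k1 : 0 ≤ a * (S₁ * (w₂ - d) - S₂ * (w₁ - d)) := mul_nonneg ha (by linarith)
    have k2 : 0 < (w₁ - d) * (w₂ - d) * (w₂ - w₁) := by positivity
    have k3 : 0 < (d + m) * d * (w₂ - w₁) := by positivity
    refine lt_irrefl (0 : ℝ) ?_
    linear_combination k2 + k3 + 2 * k1 + (w₁ - d) * f2 - (w₂ - d) * f1

theorem photon_circle_exists_unique (m a q : ℝ) (hm : 0 < m) (ha : 0 ≤ a)
    (h0 : 0 < a ^ 2 + q ^ 2) (hmaq : a ^ 2 + q ^ 2 < m ^ 2)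
    (ε : ℝ) (hε : ε = 1 ∨ ε = -1) :
    ∃! r : ℝ, rPlus m a q < r ∧
      r ^ 2 - 3 * m * r + 2 * a ^ 2 + 2 * q ^ 2
        + 2 * ε * a * Real.sqrt (r ^ 2 - 2 * m * r + a ^ 2 + q ^ 2) = 0 := by
  have hpos : 0 < m ^ 2 - a ^ 2 - q ^ 2 := by linarith
  unfold rPlus
  set d := Real.sqrt (m ^ 2 - a ^ 2 - q ^ 2) with hd_def
  have hd : 0 < d := Real.sqrt_pos.mpr hpos
  have hd2 : d ^ 2 = m ^ 2 - a ^ 2 - q ^ 2 := Real.sq_sqrt hpos.le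
  have hdm : d < m := by nlinarith
  have ham : a ≤ m := by nlinarith [sq_nonneg q]
  have hΔ : ∀ r : ℝ, r ^ 2 - 2 * m * r + a ^ 2 + q ^ 2 = (r - m) ^ 2 - d ^ 2 := by
    intro r; rw [hd2]; ring
  have hS : ∀ r : ℝ, m + d < r →
      Real.sqrt (r ^ 2 - 2 * m * r + a ^ 2 + q ^ 2) ^ 2 = (r - m) ^ 2 - d ^ 2 := by
    intro r hr
    rw [hΔ, Real.sq_sqrt]
    nlinarith
  apply existsUnique_of_exists_of_unique
  · let f : ℝ → ℝ := fun r => r ^ 2 - 3 * m * r + 2 * a ^ 2 + 2 * q ^ 2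
        + 2 * ε * a * Real.sqrt (r ^ 2 - 2 * m * r + a ^ 2 + q ^ 2)
    have hf : Continuous f := by
      unfold f
      fun_prop
    have hlo : f (m + d) < 0 := by
      have : (m + d) ^ 2 - 2 * m * (m + d) + a ^ 2 + q ^ 2 = 0 := by rw [hΔ]; ring
      simp only [f, this, Real.sqrt_zero]
      nlinarith [mul_pos hm hd, mul_pos hd hd]
    have hhi : 0 < f (5 * m) := by
      have hs := hS (5 * m) (by linarith)
      have hs0 := Real.sqrt_nonneg ((5 * m) ^ 2 - 2 * m * (5 * m) + a ^ 2 + q ^ 2)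
      simp only [f]
      set S := Real.sqrt ((5 * m) ^ 2 - 2 * m * (5 * m) + a ^ 2 + q ^ 2)
      have hS4 : S ≤ 4 * m := by nlinarith
      have haS : a * S ≤ m * (4 * m) := mul_le_mul ham hS4 hs0 hm.le
      have haS0 : 0 ≤ a * S := mul_nonneg ha hs0
      rcases hε with rfl | rfl <;> nlinarith [mul_pos hm hm]
    obtain ⟨r, hr, hr0⟩ := intermediate_value_Icc (by linarith : m + d ≤ 5 * m)
      hf.continuousOn ⟨hlo.le, hhi.le⟩
    refine ⟨r, lt_of_le_of_ne hr.1 ?_, hr0⟩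
    rintro rfl
    linarith
  · have main : ∀ x y : ℝ, m + d < x → x < y →
        x ^ 2 - 3 * m * x + 2 * a ^ 2 + 2 * q ^ 2
          + 2 * ε * a * Real.sqrt (x ^ 2 - 2 * m * x + a ^ 2 + q ^ 2) = 0 →
        y ^ 2 - 3 * m * y + 2 * a ^ 2 + 2 * q ^ 2
          + 2 * ε * a * Real.sqrt (y ^ 2 - 2 * m * y + a ^ 2 + q ^ 2) = 0 → False := by
      intro x y hx hxy fx fy
      refine photon_aux m a d (x - m) (y - m) _ _ ε hm ha hd (by linarith) (by linarith)
        (Real.sqrt_nonneg _) (Real.sqrt_nonneg _) (hS x hx) (hS y (hx.trans hxy)) hε ?_ ?_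
      · linear_combination fx - 2 * hd2
      · linear_combination fy - 2 * hd2
    rintro x y ⟨hx, fx⟩ ⟨hy, fy⟩
    rcases lt_trichotomy x y with h | h | h
    · exact (main x y hx h fx fy).elim
    · exact h
    · exact (main y x hy h fy fx).elim
end
end

section
/- Define u(r,θ) = 2mar/(ρ²Δ + 2mr(r² + a²)), f(r,θ) = ρ²Δ/((r² + a²)² − Δ a² sin²θ), and for (r,θ) with r > r₊, 0 < θ < π, t ∈ ℝ and v = (v₁, v₂, v₃) ∈ ℝ³ the spatial quadratic form G(r,θ,t)(v) = ρ²(v₁²/Δ + v₂²) + (sin²θ/ρ²)((r² + a²)² − Δ a² sin²θ)·(t(∂u/∂r · v₁ + ∂u/∂θ · v₂) + v₃)². Then for every compact subset C of {(r,θ) : r > r₊, 0 < θ < π} there exist constants A > 0 and B > 0 such that for all (r,θ) ∈ C, all t ∈ ℝ and all v ∈ ℝ³: G(r,θ,t)(v) ≤ f(r,θ)·(A + B|t|)²·(v₁² + v₂² + v₃²). (This is the metric growth condition for the orthogonal splitting of the exterior Kerr–Newman spacetime, with F(t) = A + B|t| satisfying ∫_{−∞}^0 dt/F(t) = ∞.)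 -/
noncomputable section

open Real

/-- u(r,θ) = 2mar/(ρ²Δ + 2mr(r² + a²)). -/
def uKN (m a q r θ : ℝ) : ℝ :=
  2 * m * a * r / (rhoSq a r θ * Delta m a q r + 2 * m * r * (r ^ 2 + a ^ 2))

/-- f(r,θ) = ρ²Δ/((r² + a²)² − Δ a² sin²θ). -/
def fKN (m a q r θ : ℝ) : ℝ :=
  rhoSq a r θ * Delta m a q r /
    ((r ^ 2 + a ^ 2) ^ 2 - Delta m a q r * a ^ 2 * Real.sin θ ^ 2)

/-- The spatial quadratic form G(r,θ,t)(v) of the orthogonal splitting. -/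
def GKN (m a q r θ t : ℝ) (v : ℝ × ℝ × ℝ) : ℝ :=
  rhoSq a r θ * (v.1 ^ 2 / Delta m a q r + v.2.1 ^ 2)
  + (Real.sin θ ^ 2 / rhoSq a r θ) *
      ((r ^ 2 + a ^ 2) ^ 2 - Delta m a q r * a ^ 2 * Real.sin θ ^ 2) *
      (t * (deriv (fun r' => uKN m a q r' θ) r * v.1
            + deriv (fun θ' => uKN m a q r θ') θ * v.2.1) + v.2.2) ^ 2

def DKN (m a q r θ : ℝ) : ℝ :=
  rhoSq a r θ * Delta m a q r + 2 * m * r * (r ^ 2 + a ^ 2)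

def WKN (m a q r θ : ℝ) : ℝ :=
  (r ^ 2 + a ^ 2) ^ 2 - Delta m a q r * a ^ 2 * Real.sin θ ^ 2

def urKN (m a q r θ : ℝ) : ℝ :=
  (2 * m * a * DKN m a q r θ - 2 * m * a * r *
    (2 * r * Delta m a q r + rhoSq a r θ * (2 * r - 2 * m) + 2 * m * (3 * r ^ 2 + a ^ 2)))
    / DKN m a q r θ ^ 2

def uthKN (m a q r θ : ℝ) : ℝ :=
  (2 * m * a * r * (2 * a ^ 2 * Real.cos θ * Real.sin θ * Delta m a q r)) / DKN m a q r θ ^ 2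

lemma pos_facts (m a q r θ : ℝ) (hm : 0 < m) (hmaq : a ^ 2 + q ^ 2 ≤ m ^ 2)
    (hr : rPlus m a q < r) :
    0 < rhoSq a r θ ∧ 0 < Delta m a q r ∧ 0 < DKN m a q r θ ∧ 0 < WKN m a q r θ := by
  unfold rPlus at hr
  have hs0 := Real.sqrt_nonneg (m ^ 2 - a ^ 2 - q ^ 2)
  have hs := Real.sq_sqrt (show 0 ≤ m ^ 2 - a ^ 2 - q ^ 2 by linarith)
  set s := Real.sqrt (m ^ 2 - a ^ 2 - q ^ 2)
  have hrm : m < r := by linarith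
  have hr0 : 0 < r := by linarith
  have h1 : 0 < rhoSq a r θ := by unfold rhoSq; positivity
  have h2 : 0 < Delta m a q r := by
    unfold Delta
    nlinarith [mul_pos (show 0 < r - m - s by linarith) (show 0 < r - m + s by linarith)]
  have h3 : Delta m a q r ≤ r ^ 2 + a ^ 2 := by
    unfold Delta
    nlinarith [sq_nonneg a, mul_pos hm (sub_pos.2 hrm), mul_pos hm hm]
  refine ⟨h1, h2, by unfold DKN; positivity, ?_⟩
  unfold WKN
  have h4 : a ^ 2 * Real.sin θ ^ 2 ≤ a ^ 2 :=
    mul_le_of_le_one_right (sq_nonneg a) (Real.sin_sq_le_one θ)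
  have h5 : Delta m a q r * (a ^ 2 * Real.sin θ ^ 2) ≤ (r ^ 2 + a ^ 2) * a ^ 2 :=
    mul_le_mul h3 h4 (by positivity) (by positivity)
  have h6 : 0 < (r ^ 2 + a ^ 2) * r ^ 2 := by positivity
  nlinarith

lemma deriv_r (m a q r θ : ℝ) (hD : DKN m a q r θ ≠ 0) :
    deriv (fun r' => uKN m a q r' θ) r = urKN m a q r θ := by
  apply HasDerivAt.deriv
  have hp : HasDerivAt (fun x : ℝ => x ^ 2) (2 * r) r := by simpa using hasDerivAt_pow 2 r
  have hi := hasDerivAt_id' r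
  have hΔ : HasDerivAt (fun x => Delta m a q x) (2 * r - 2 * m) r := by
    have := (((hp.sub (hi.const_mul (2 * m))).add_const (a ^ 2)).add_const (q ^ 2))
    rw [mul_one] at this
    exact this
  have hρ : HasDerivAt (fun x => rhoSq a x θ) (2 * r) r := hp.add_const _
  have hD' := (hρ.mul hΔ).add ((hi.const_mul (2 * m)).mul (hp.add_const (a ^ 2)))
  have := (hi.const_mul (2 * m * a)).div hD' hD
  refine this.congr_deriv ?_
  unfold urKN
  congr 1
  simp only [DKN, Pi.add_apply, Pi.mul_apply]
  ring

lemma deriv_th (m a q r θ : ℝ) (hD : DKN m a q r θ ≠ 0) :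
    deriv (fun θ' => uKN m a q r θ') θ = uthKN m a q r θ := by
  apply HasDerivAt.deriv
  have hρ : HasDerivAt (fun x => rhoSq a r x) (a ^ 2 * (2 * Real.cos θ * (-Real.sin θ))) θ := by
    have := (((Real.hasDerivAt_cos θ).pow 2).const_mul (a ^ 2)).const_add (r ^ 2)
    refine this.congr_deriv ?_
    norm_num
  have hD' := (hρ.mul_const (Delta m a q r)).add_const (2 * m * r * (r ^ 2 + a ^ 2))
  have := (hasDerivAt_const θ (2 * m * a * r)).div hD' hD
  refine this.congr_deriv ?_
  unfold uthKN
  congr 1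
  ring

lemma alg_bound (P1 P2 K t x y v1 v2 v3 f A B : ℝ) (hP1 : 0 ≤ P1) (hP2 : 0 ≤ P2) (hK : 0 ≤ K)
    (hf : 0 < f) (hA : 0 < A) (hB : 0 < B) (h1 : (P1 + P2 + K) / f ≤ A ^ 2)
    (h2 : K * (x ^ 2 + y ^ 2) / f ≤ B ^ 2) :
    P1 * v1 ^ 2 + P2 * v2 ^ 2 + K * (t * (x * v1 + y * v2) + v3) ^ 2 ≤
      f * (A + B * |t|) ^ 2 * (v1 ^ 2 + v2 ^ 2 + v3 ^ 2) := by
  rw [div_le_iff₀ hf] at h1 h2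
  set N := v1 ^ 2 + v2 ^ 2 + v3 ^ 2 with hN
  have hN0 : 0 ≤ N := by positivity
  have hcs : (t * (x * v1 + y * v2) + v3) ^ 2 ≤ (t ^ 2 * (x ^ 2 + y ^ 2) + 1) * N := by
    rw [hN]
    nlinarith [sq_nonneg (t * x * v2 - t * y * v1), sq_nonneg (t * x * v3 - v1),
      sq_nonneg (t * y * v3 - v2)]
  have e1 : P1 * v1 ^ 2 ≤ P1 * N :=
    mul_le_mul_of_nonneg_left (by rw [hN]; nlinarith [sq_nonneg v2, sq_nonneg v3]) hP1
  have e2 : P2 * v2 ^ 2 ≤ P2 * N :=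
    mul_le_mul_of_nonneg_left (by rw [hN]; nlinarith [sq_nonneg v1, sq_nonneg v3]) hP2
  have e3 := mul_le_mul_of_nonneg_left hcs hK
  have e4 : (P1 + P2 + K + K * (x ^ 2 + y ^ 2) * t ^ 2) ≤ f * (A + B * |t|) ^ 2 := by
    have g1 := mul_le_mul_of_nonneg_right h2 (sq_nonneg t)
    have g2 : 0 ≤ f * (A * B * |t|) := by positivity
    have g3 := sq_abs t
    have g4 : f * (A + B * |t|) ^ 2 = A ^ 2 * f + 2 * (f * (A * B * |t|)) + B ^ 2 * f * t ^ 2 := by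
      rw [← g3]; ring
    linarith
  have e5 := mul_le_mul_of_nonneg_right e4 hN0
  linarith

theorem metric_growth_condition (m a q : ℝ) (hm : 0 < m) (ha : 0 ≤ a)
    (hmaq : a ^ 2 + q ^ 2 ≤ m ^ 2)
    (C : Set (ℝ × ℝ)) (hC : IsCompact C)
    (hCsub : C ⊆ {p : ℝ × ℝ | rPlus m a q < p.1 ∧ 0 < p.2 ∧ p.2 < π}) :
    ∃ A B : ℝ, 0 < A ∧ 0 < B ∧
      ∀ p ∈ C, ∀ t : ℝ, ∀ v : ℝ × ℝ × ℝ,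
        GKN m a q p.1 p.2 t v ≤
          fKN m a q p.1 p.2 * (A + B * |t|) ^ 2 *
            (v.1 ^ 2 + v.2.1 ^ 2 + v.2.2 ^ 2) := by
  have hpos : ∀ p ∈ C, 0 < rhoSq a p.1 p.2 ∧ 0 < Delta m a q p.1 ∧ 0 < DKN m a q p.1 p.2 ∧
      0 < WKN m a q p.1 p.2 := fun p hp => pos_facts m a q p.1 p.2 hm hmaq (hCsub hp).1
  have cρ : ContinuousOn (fun p : ℝ × ℝ => rhoSq a p.1 p.2) C := by
    unfold rhoSq; fun_prop
  have cΔ : ContinuousOn (fun p : ℝ × ℝ => Delta m a q p.1) C := by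
    unfold Delta; fun_prop
  have cD : ContinuousOn (fun p : ℝ × ℝ => DKN m a q p.1 p.2) C := by
    unfold DKN; fun_prop
  have cW : ContinuousOn (fun p : ℝ × ℝ => WKN m a q p.1 p.2) C := by
    unfold WKN; fun_prop
  have cf : ContinuousOn (fun p : ℝ × ℝ => fKN m a q p.1 p.2) C :=
    (cρ.mul cΔ).div cW fun p hp => (hpos p hp).2.2.2.ne'
  have hf : ∀ p ∈ C, 0 < fKN m a q p.1 p.2 := fun p hp =>
    div_pos (mul_pos (hpos p hp).1 (hpos p hp).2.1) (hpos p hp).2.2.2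
  have cx : ContinuousOn (fun p : ℝ × ℝ => urKN m a q p.1 p.2) C := by
    unfold urKN
    refine ContinuousOn.div (by fun_prop) (by fun_prop) fun p hp => ?_
    exact pow_ne_zero 2 (hpos p hp).2.2.1.ne'
  have cy : ContinuousOn (fun p : ℝ × ℝ => uthKN m a q p.1 p.2) C := by
    unfold uthKN
    refine ContinuousOn.div (by fun_prop) (by fun_prop) fun p hp => ?_
    exact pow_ne_zero 2 (hpos p hp).2.2.1.ne'
  have cK : ContinuousOn (fun p : ℝ × ℝ =>
      Real.sin p.2 ^ 2 / rhoSq a p.1 p.2 * WKN m a q p.1 p.2) C :=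
    (ContinuousOn.div (by fun_prop) cρ fun p hp => (hpos p hp).1.ne').mul cW
  have cP : ContinuousOn (fun p : ℝ × ℝ => rhoSq a p.1 p.2 / Delta m a q p.1) C :=
    cρ.div cΔ fun p hp => (hpos p hp).2.1.ne'
  obtain ⟨c1, hc1⟩ := hC.exists_bound_of_continuousOn
    (((cP.add cρ).add cK).div cf fun p hp => (hf p hp).ne')
  obtain ⟨c2, hc2⟩ := hC.exists_bound_of_continuousOn
    ((cK.mul ((cx.pow 2).add (cy.pow 2))).div cf fun p hp => (hf p hp).ne')
  have hsq : ∀ c : ℝ, c ≤ (|c| + 1) ^ 2 := fun c => by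
    nlinarith [le_abs_self c, abs_nonneg c]
  refine ⟨|c1| + 1, |c2| + 1, by positivity, by positivity, fun p hp t v => ?_⟩
  obtain ⟨h1, h2, h3, h4⟩ := hpos p hp
  have b1 := ((le_abs_self _).trans (hc1 p hp)).trans (hsq c1)
  have b2 := ((le_abs_self _).trans (hc2 p hp)).trans (hsq c2)
  have key := alg_bound _ _ _ t _ _ v.1 v.2.1 v.2.2 _ (|c1| + 1) (|c2| + 1)
    (div_pos h1 h2).le h1.le
    (mul_nonneg (div_nonneg (sq_nonneg (Real.sin p.2)) h1.le) h4.le)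
    (hf p hp) (by positivity) (by positivity) b1 b2
  refine le_trans (le_of_eq ?_) key
  unfold GKN
  rw [deriv_r m a q p.1 p.2 h3.ne', deriv_th m a q p.1 p.2 h3.ne']
  unfold WKN
  ring
end
end
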